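/- arXiv:2506.11281 — 3 statements merged into one kernel-verified Lean document; each statement's English description precedes it below -/
import Mathlib

section
/- (Theorem 1) Let E be a finite-dimensional real inner product space and m ∈ ℕ. Let Q : E → E be differentiable at x ∈ E and suppose its Fréchet derivative P = DQ(x) is a symmetric idempotent, i.e., self-adjoint with P ∘ P = P (so P is the orthogonal projection onto the tangent space of the clean data manifold at Q(x)). Let H : E → EuclideanSpace ℝ (Fin m) be differentiable at Q(x), and define R_H(y) = ‖H(Q(y))‖². Then the gradient ∇R_H(x) lies in the range of P; equivalently, P(∇R_H(x)) = ∇R_H(x), so that projecting ∇R_H(x) onto the range of P leaves it unchanged. -/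
open RealInnerProductSpace

section Gradient

variable {𝕜 E F : Type*} [RCLike 𝕜]
  [NormedAddCommGroup E] [InnerProductSpace 𝕜 E] [CompleteSpace E]
  [NormedAddCommGroup F] [InnerProductSpace 𝕜 F] [CompleteSpace F]

theorem toDual_adjoint_apply (A : E →L[𝕜] F) (y : F) :
    InnerProductSpace.toDual 𝕜 E (A.adjoint y) = (InnerProductSpace.toDual 𝕜 F y).comp A :=
  ContinuousLinearMap.ext fun v => A.adjoint_inner_left v y

theorem hasGradientAt_comp_of_hasFDerivAt {g : F → 𝕜} {g' : F} {f : E → F} {f' : E →L[𝕜] F}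
    {x : E} (hg : HasGradientAt g g' (f x)) (hf : HasFDerivAt f f' x) :
    HasGradientAt (g ∘ f) (f'.adjoint g') x := by
  rw [hasGradientAt_iff_hasFDerivAt, toDual_adjoint_apply]
  exact hg.hasFDerivAt.comp x hf

theorem residual_gradient_tangential_general {g : E → 𝕜} {Q : E → E} {P : E →L[𝕜] E} {x : E}
    (hQ : HasFDerivAt Q P x) (hP : IsStarProjection P) (hg : DifferentiableAt 𝕜 g (Q x)) :
    P (gradient (g ∘ Q) x) = gradient (g ∘ Q) x := by
  have gradient_eq : gradient (g ∘ Q) x = P (gradient g (Q x)) := by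
    rw [(hasGradientAt_comp_of_hasFDerivAt hg.hasGradientAt hQ).gradient,
      hP.isSelfAdjoint.adjoint_eq]
  rw [gradient_eq]
  exact DFunLike.congr_fun hP.isIdempotentElem.eq _

end Gradient

/-- (Theorem 1 of the paper) If the Fréchet derivative `P = DQ(x)` of the denoising map
`Q` is a symmetric idempotent (the orthogonal projection onto the tangent space of the
clean data manifold), then the gradient of the residual `R_H(y) = ‖H(Q y)‖²` at `x`
lies in the range of `P`: projecting it onto the range of `P` leaves it unchanged. -/
theorem residual_gradient_tangential
    {E : Type*} [NormedAddCommGroup E] [InnerProductSpace ℝ E] [FiniteDimensional ℝ E]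
    (m : ℕ) (Q : E → E) (H : E → EuclideanSpace ℝ (Fin m)) (x : E)
    (hQ : DifferentiableAt ℝ Q x)
    (hsa : ∀ u v : E, ⟪(fderiv ℝ Q x) u, v⟫ = ⟪u, (fderiv ℝ Q x) v⟫)
    (hidem : (fderiv ℝ Q x).comp (fderiv ℝ Q x) = fderiv ℝ Q x)
    (hH : DifferentiableAt ℝ H (Q x)) :
    (fderiv ℝ Q x) (gradient (fun y => ‖H (Q y)‖ ^ 2) x) =
      gradient (fun y => ‖H (Q y)‖ ^ 2) x :=
  residual_gradient_tangential_general hQ.hasFDerivAt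
    ⟨hidem, ContinuousLinearMap.isSelfAdjoint_iff_isSymmetric.mpr hsa⟩ (hH.norm_sq ℝ)
end

section
/- Let E be a finite-dimensional real inner product space, m ∈ ℕ, and let Q : E → E be differentiable at x ∈ E with Fréchet derivative P = DQ(x) a symmetric idempotent (self-adjoint, P ∘ P = P). Let G : E → EuclideanSpace ℝ (Fin m) be differentiable at Q(x), and define the inequality residual R_G(y) = Σ_{i} (max(G(Q(y))_i, 0))². Then R_G is differentiable at x and its gradient satisfies P(∇R_G(x)) = ∇R_G(x), i.e., ∇R_G(x) lies in the range of P. -/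
open RealInnerProductSpace

/-!
Write `R_G = f ∘ Q`, where `f` is the squared norm of the positive part of `G`. The chain rule
gives `∇(f ∘ Q)(x) = P† (∇f (Q x)) = P (∇f (Q x))`, and the idempotent `P` fixes every vector of
this form. The kink of `max s 0` disappears on squaring: `max s 0 ^ 2` differs from its tangent
line at `t` by at most `(s - t) ^ 2`, whatever the signs of `s` and `t`.
-/

section Gradient

variable {𝕜 E F : Type*} [RCLike 𝕜]
  [NormedAddCommGroup E] [InnerProductSpace 𝕜 E] [CompleteSpace E]
  [NormedAddCommGroup F] [InnerProductSpace 𝕜 F] [CompleteSpace F]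

theorem hasGradientAt_comp_hasFDerivAt {f : F → 𝕜} {g : F} {Q : E → F} {Q' : E →L[𝕜] F} {x : E}
    (hf : HasGradientAt f g (Q x)) (hQ : HasFDerivAt Q Q' x) :
    HasGradientAt (f ∘ Q) (Q'.adjoint g) x := by
  rw [hasGradientAt_iff_hasFDerivAt]
  convert! hf.hasFDerivAt.comp x hQ using 1
  ext v
  exact Q'.adjoint_inner_left v g

theorem apply_gradient_comp_of_isStarProjection {f : E → 𝕜} {Q : E → E} {P : E →L[𝕜] E} {x : E}
    (hP : IsStarProjection P) (hQ : HasFDerivAt Q P x) (hf : DifferentiableAt 𝕜 f (Q x)) :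
    P (gradient (f ∘ Q) x) = gradient (f ∘ Q) x := by
  have gradient_eq : gradient (f ∘ Q) x = P (gradient f (Q x)) := by
    rw [(hasGradientAt_comp_hasFDerivAt hf.hasGradientAt hQ).gradient, hP.isSelfAdjoint.adjoint_eq]
  rw [gradient_eq]
  exact DFunLike.congr_fun hP.isIdempotentElem.eq (gradient f (Q x))

end Gradient

section Residual

theorem abs_max_zero_sq_sub_sub_le {R : Type*} [CommRing R] [LinearOrder R] [IsStrictOrderedRing R]
    (s t : R) :
    |max s 0 ^ 2 - max t 0 ^ 2 - 2 * max t 0 * (s - t)| ≤ (s - t) ^ 2 := by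
  rw [abs_le]
  rcases le_total s 0 with hs | hs <;> rcases le_total t 0 with ht | ht <;>
    simp only [hs, ht, max_eq_left, max_eq_right] <;> constructor <;> nlinarith

theorem hasDerivAt_max_zero_sq (t : ℝ) :
    HasDerivAt (fun s : ℝ => max s 0 ^ 2) (2 * max t 0) t := by
  have remainder_isBigO : (fun s : ℝ => max s 0 ^ 2 - max t 0 ^ 2 - (s - t) • (2 * max t 0))
      =O[nhds t] fun s => ‖s - t‖ ^ 2 := by
    refine .of_norm_le fun s => ?_
    rw [smul_eq_mul, mul_comm (s - t), Real.norm_eq_abs, Real.norm_eq_abs, sq_abs]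
    exact abs_max_zero_sq_sub_sub_le s t
  exact .of_isLittleO (remainder_isBigO.trans_isLittleO
    (Asymptotics.isLittleO_pow_sub_sub t one_lt_two))

variable {ι : Type*} [Fintype ι]

/-- The squared violation `‖max(z, 0)‖²` of the constraints `z ≤ 0`, with the maximum taken
coordinatewise, so that the residual `R_G` is `inequalityResidual ∘ G ∘ Q`. -/
noncomputable def inequalityResidual (z : EuclideanSpace ℝ ι) : ℝ :=
  ∑ i, max (z i) 0 ^ 2

theorem differentiable_inequalityResidual :
    Differentiable ℝ (inequalityResidual : EuclideanSpace ℝ ι → ℝ) := by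
  refine fun z => .fun_sum fun i _ => ?_
  have coordinate_differentiableAt :
      DifferentiableAt ℝ (fun w : EuclideanSpace ℝ ι => w i) z := by fun_prop
  exact (hasDerivAt_max_zero_sq (z i)).differentiableAt.comp z coordinate_differentiableAt

theorem inequality_residual_gradient_tangential_general
    {E : Type*} [NormedAddCommGroup E] [InnerProductSpace ℝ E] [CompleteSpace E]
    {Q : E → E} {P : E →L[ℝ] E} {G : E → EuclideanSpace ℝ ι} {x : E}
    (hP : IsStarProjection P) (hQ : HasFDerivAt Q P x) (hG : DifferentiableAt ℝ G (Q x)) :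
    DifferentiableAt ℝ (fun y => ∑ i, max (G (Q y) i) 0 ^ 2) x ∧
    P (gradient (fun y => ∑ i, max (G (Q y) i) 0 ^ 2) x) =
      gradient (fun y => ∑ i, max (G (Q y) i) 0 ^ 2) x := by
  have residual_differentiableAt : DifferentiableAt ℝ (inequalityResidual ∘ G) (Q x) :=
    (differentiable_inequalityResidual (G (Q x))).comp (Q x) hG
  exact ⟨residual_differentiableAt.comp x hQ.differentiableAt,
    apply_gradient_comp_of_isStarProjection hP hQ residual_differentiableAt⟩

end Residual

/-- Inequality-constraint analogue of Theorem 1: the gradient of the inequality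
residual `R_G(y) = Σᵢ (max (G(Q y))ᵢ 0)²` at `x` lies in the range of the
symmetric idempotent `P = DQ(x)`. -/
theorem inequality_residual_gradient_tangential
    {E : Type*} [NormedAddCommGroup E] [InnerProductSpace ℝ E] [FiniteDimensional ℝ E]
    (m : ℕ) (Q : E → E) (G : E → EuclideanSpace ℝ (Fin m)) (x : E)
    (hQ : DifferentiableAt ℝ Q x)
    (hsa : ∀ u v : E, ⟪(fderiv ℝ Q x) u, v⟫ = ⟪u, (fderiv ℝ Q x) v⟫)
    (hidem : (fderiv ℝ Q x).comp (fderiv ℝ Q x) = fderiv ℝ Q x)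
    (hG : DifferentiableAt ℝ G (Q x)) :
    DifferentiableAt ℝ (fun y => ∑ i, max (G (Q y) i) 0 ^ 2) x ∧
    (fderiv ℝ Q x) (gradient (fun y => ∑ i, max (G (Q y) i) 0 ^ 2) x) =
      gradient (fun y => ∑ i, max (G (Q y) i) 0 ^ 2) x := by
  have hP : IsStarProjection (fderiv ℝ Q x) :=
    ⟨hidem, ContinuousLinearMap.isSelfAdjoint_iff_isSymmetric.mpr hsa⟩
  exact inequality_residual_gradient_tangential_general hP hQ.hasFDerivAt hG
end

section
/- Let T ≥ 1 and let β₁, …, β_T ∈ ℝ with 0 < β_t < 1 for each t. Set α_t = 1 − β_t and ᾱ_t = ∏_{s=1}^{t} α_s. Fix x₀ ∈ ℝ and define probability measures on ℝ recursively by μ₀ = δ_{x₀} (Dirac measure) and μ_t = μ_{t−1}.bind (fun x ↦ gaussianReal (√α_t · x) β_t), where gaussianReal m v is the Gaussian measure on ℝ with mean m and variance v. Then for every t ∈ {0, 1, …, T}, μ_t = gaussianReal (√ᾱ_t · x₀) (1 − ᾱ_t). -/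
open MeasureTheory ProbabilityTheory

/-!
The kernels `K a : x ↦ N(√a x, 1 - a)`, `a ∈ [0, 1]`, form a multiplicative semigroup,
`K b ∘ K a = K (a * b)`: a Gaussian `N(m, v)` pushed through `x ↦ N(c x, w)` is the convolution
`N(c m, c² v) ∗ N(0, w) = N(c m, c² v + w)`, and for `c² = b` the variances add up to
`b (1 - a) + (1 - b) = 1 - a b`. The forward step with noise `β` is `K (1 - β)`, so `t` steps
compose to `K ᾱ_t`, whatever the initial distribution.
-/

lemma conv_eq_bind_map_const_add {M : Type*} [AddMonoid M] [MeasurableSpace M] [MeasurableAdd₂ M]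
    (μ ν : Measure M) [SFinite ν] : μ ∗ ν = μ.bind fun x ↦ ν.map (x + ·) := by
  have hmeas : Measurable fun x : M ↦ ν.map (x + ·) := by
    have hmap (x : M) : ν.map (x + ·) = (ν.map (Prod.mk x)).map fun p : M × M ↦ p.1 + p.2 :=
      (Measure.map_map measurable_add measurable_prodMk_left).symm
    simp_rw [hmap]
    exact (Measure.measurable_map _ measurable_add).comp Measurable.map_prodMk_left
  ext s hs
  calc (μ ∗ ν) s
      = μ.prod ν ((fun p : M × M ↦ p.1 + p.2) ⁻¹' s) := Measure.map_apply measurable_add hs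
    _ = ∫⁻ x, ν ((x + ·) ⁻¹' s) ∂μ := Measure.prod_apply (measurable_add hs)
    _ = ∫⁻ x, ν.map (x + ·) s ∂μ := by simp_rw [Measure.map_apply (measurable_const_add _) hs]
    _ = (μ.bind fun x ↦ ν.map (x + ·)) s := (Measure.bind_apply hs hmeas.aemeasurable).symm

lemma bind_map_eq_bind_comp {X Y Z : Type*} [MeasurableSpace X] [MeasurableSpace Y]
    [MeasurableSpace Z] (μ : Measure X) {f : X → Y} {g : Y → Measure Z} (hf : Measurable f)
    (hg : Measurable g) : (μ.map f).bind g = μ.bind (g ∘ f) := by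
  rw [Measure.bind, Measure.bind, Measure.map_map hg hf]

lemma measurable_gaussianReal_left (v : NNReal) : Measurable fun m ↦ gaussianReal m v :=
  measurable_gaussianReal.comp measurable_prodMk_right

lemma gaussianReal_bind_gaussianReal_const_mul (m c : ℝ) (v w : NNReal) :
    (gaussianReal m v).bind (fun x ↦ gaussianReal (c * x) w) =
      gaussianReal (c * m) (NNReal.mk (c ^ 2) (sq_nonneg c) * v + w) := by
  have htranslate (y : ℝ) : (gaussianReal 0 w).map (y + ·) = gaussianReal y w := by
    rw [gaussianReal_map_const_add, zero_add]
  calc (gaussianReal m v).bind (fun x ↦ gaussianReal (c * x) w)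
      = ((gaussianReal m v).map (c * ·)).bind fun y ↦ gaussianReal y w :=
        (bind_map_eq_bind_comp _ (measurable_const_mul c) (measurable_gaussianReal_left w)).symm
    _ = (gaussianReal m v).map (c * ·) ∗ gaussianReal 0 w := by
        simp_rw [conv_eq_bind_map_const_add, htranslate]
    _ = gaussianReal (c * m) (NNReal.mk (c ^ 2) (sq_nonneg c) * v + w) := by
        rw [gaussianReal_map_const_mul, gaussianReal_conv_gaussianReal, add_zero]

/-- The variance-preserving Gaussian noising kernel `x ↦ N(√a x, 1 - a)`, where `a` is the fraction
of signal power retained (`α_t` for one forward step, `ᾱ_t` for the first `t` steps). It is meant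
for `a ∈ [0, 1]`: outside this range the square root or the variance is truncated to `0`. -/
noncomputable def noisingKernel (a : ℝ) : Kernel ℝ ℝ where
  toFun x := gaussianReal (√a * x) (1 - a).toNNReal
  measurable' := (measurable_gaussianReal_left _).comp (measurable_const_mul _)

lemma noisingKernel_apply (a x : ℝ) :
    noisingKernel a x = gaussianReal (√a * x) (1 - a).toNNReal := rfl

lemma coe_noisingKernel_one_sub (b : ℝ) :
    ⇑(noisingKernel (1 - b)) = fun x ↦ gaussianReal (√(1 - b) * x) b.toNNReal := by
  ext1 x
  rw [noisingKernel_apply, sub_sub_cancel]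

lemma noisingKernel_one : noisingKernel 1 = Kernel.id := by
  ext1 x
  simp [noisingKernel_apply, Kernel.id_apply]

lemma noisingKernel_comp_noisingKernel {a b : ℝ} (ha : a ≤ 1) (hb₀ : 0 ≤ b) (hb₁ : b ≤ 1) :
    noisingKernel b ∘ₖ noisingKernel a = noisingKernel (a * b) := by
  have hmean (x : ℝ) : √b * (√a * x) = √(a * b) * x := by
    rw [Real.sqrt_mul' a hb₀]; ring
  have hvar : NNReal.mk (√b ^ 2) (sq_nonneg _) * (1 - a).toNNReal + (1 - b).toNNReal =
      (1 - a * b).toNNReal := by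
    have hsq : NNReal.mk (√b ^ 2) (sq_nonneg _) = b.toNNReal := by
      ext
      rw [NNReal.coe_mk, Real.sq_sqrt hb₀, Real.coe_toNNReal b hb₀]
    rw [hsq, ← Real.toNNReal_mul hb₀,
      ← Real.toNNReal_add (mul_nonneg hb₀ (sub_nonneg.2 ha)) (sub_nonneg.2 hb₁)]
    congr 1
    ring
  ext1 x
  calc (noisingKernel b ∘ₖ noisingKernel a) x
      = (gaussianReal (√a * x) (1 - a).toNNReal).bind
          (fun y ↦ gaussianReal (√b * y) (1 - b).toNNReal) := Kernel.comp_apply _ _ x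
    _ = noisingKernel (a * b) x := by
        rw [gaussianReal_bind_gaussianReal_const_mul, hmean, hvar, noisingKernel_apply]

theorem ddpm_forward_marginal_general
    (T : ℕ) (β : ℕ → ℝ) (hβ : ∀ t, 1 ≤ t → t ≤ T → 0 ≤ β t ∧ β t ≤ 1) (μ : ℕ → Measure ℝ)
    (hμ : ∀ t, 1 ≤ t → t ≤ T →
      μ t = (μ (t - 1)).bind (fun x ↦ gaussianReal (√(1 - β t) * x) (β t).toNNReal)) :
    ∀ t ≤ T, μ t = (μ 0).bind (fun x ↦ gaussianReal
      (√(∏ s ∈ Finset.Icc 1 t, (1 - β s)) * x)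
      (1 - ∏ s ∈ Finset.Icc 1 t, (1 - β s)).toNNReal) := by
  suffices h : ∀ t ≤ T, μ t = noisingKernel (∏ s ∈ Finset.Icc 1 t, (1 - β s)) ∘ₘ μ 0 from h
  have hstep (t : ℕ) (ht₁ : 1 ≤ t) (htT : t ≤ T) :
      μ t = noisingKernel (1 - β t) ∘ₘ μ (t - 1) := by
    rw [coe_noisingKernel_one_sub, hμ t ht₁ htT]
  intro t
  induction t with
  | zero => simp [noisingKernel_one]
  | succ t ih =>
    intro ht
    obtain ⟨hβ₀, hβ₁⟩ := hβ (t + 1) (by lia) ht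
    have hprod : ∏ s ∈ Finset.Icc 1 t, (1 - β s) ≤ 1 := by
      refine Finset.prod_le_one (fun s hs ↦ ?_) (fun s hs ↦ ?_) <;>
      · obtain ⟨hs₁, hst⟩ := Finset.mem_Icc.1 hs
        linarith [hβ s hs₁ (by lia)]
    rw [hstep (t + 1) (by lia) ht, Nat.add_sub_cancel, ih (by lia), Measure.comp_assoc,
      noisingKernel_comp_noisingKernel hprod (by linarith) (by linarith),
      Finset.prod_Icc_succ_top (by lia)]

/-- Closed-form marginal of the DDPM forward process (equation (5) of the paper):
starting from `μ₀ = δ_{x₀}` and applying the Gaussian transition kernel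
`q(x_t | x_{t-1}) = N(√(1-β_t) x_{t-1}, β_t)`, the marginal at step `t` is
`N(√ᾱ_t x₀, 1 - ᾱ_t)` with `ᾱ_t = ∏_{s=1}^t (1 - β_s)`. -/
theorem ddpm_forward_marginal
    (T : ℕ) (hT : 1 ≤ T) (β : ℕ → ℝ)
    (hβ : ∀ t, 1 ≤ t → t ≤ T → 0 < β t ∧ β t < 1)
    (x₀ : ℝ) (μ : ℕ → Measure ℝ)
    (hμ0 : μ 0 = Measure.dirac x₀)
    (hμ : ∀ t, 1 ≤ t → t ≤ T →
      μ t = (μ (t - 1)).bind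
        (fun x => gaussianReal (Real.sqrt (1 - β t) * x) (Real.toNNReal (β t)))) :
    ∀ t ≤ T, μ t = gaussianReal
      (Real.sqrt (∏ s ∈ Finset.Icc 1 t, (1 - β s)) * x₀)
      (Real.toNNReal (1 - ∏ s ∈ Finset.Icc 1 t, (1 - β s))) := by
  intro t ht
  rw [ddpm_forward_marginal_general T β (fun s h₁ h ↦ (hβ s h₁ h).imp le_of_lt le_of_lt) μ hμ t ht,
    hμ0]
  exact Measure.dirac_bind (noisingKernel _).measurable x₀
end
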